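/- Let Ω ⊂ ℂⁿ be open and let ν : Ω → [0,∞) be measurable such that for every compact set K ⊂ Ω there is a constant c_K > 0 with ν ≥ c_K λ-almost everywhere on K. Let μ be the measure ν·λ on Ω. Then the set A²(Ω,μ) of those elements of L²(Ω,μ) that possess a representative which is holomorphic on Ω is a closed linear subspace of L²(Ω,μ). -/

import Mathlib

open MeasureTheory

/-- Rotation invariance of Lebesgue measure on `ℂⁿ`. -/
lemma rot_measurePreserving (n : ℕ) (c : Circle) :
    MeasurePreserving (fun w : Fin n → ℂ => (c : ℂ) • w) volume volume := by
  have h := volume_preserving_pi (ι := Fin n) (α' := fun _ => ℂ) (β' := fun _ => ℂ)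
    (f := fun _ => rotation c) (fun _ => (rotation c).measurePreserving)
  have e : (fun w : Fin n → ℂ => (c : ℂ) • w) = fun a i => rotation c (a i) := by
    ext w i
    simp
  rw [e]
  exact h

/-- Sub-mean value property on a circle. -/
lemma circle_mean (φ : ℂ → ℂ) (h : DifferentiableOn ℂ φ (Metric.closedBall 0 1)) :
    ENNReal.ofReal (2 * Real.pi) * ‖φ 0‖ₑ ≤
      ∫⁻ θ in Set.Ioc 0 (2 * Real.pi), ‖φ (circleMap 0 1 θ)‖ₑ := by
  have h1 : Real.circleAverage φ 0 1 = φ 0 := by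
    apply circleAverage_of_differentiable_on_off_countable Set.countable_empty
    · simpa using h.continuousOn
    · intro z hz
      simp only [abs_one, Set.sdiff_empty] at hz
      exact (h z (Metric.ball_subset_closedBall hz)).differentiableAt
        (Metric.closedBall_mem_nhds_of_mem hz)
  have h2 : (2 * Real.pi) • φ 0 = ∫ θ in Set.Ioc 0 (2 * Real.pi), φ (circleMap 0 1 θ) := by
    rw [← h1, Real.circleAverage, smul_smul, mul_inv_cancel₀ (by positivity), one_smul,
      intervalIntegral.integral_of_le (by positivity)]
  calc ENNReal.ofReal (2 * Real.pi) * ‖φ 0‖ₑ = ‖(2 * Real.pi) • φ 0‖ₑ := by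
        rw [enorm_smul, Real.enorm_eq_ofReal (by positivity)]
    _ ≤ _ := by
        rw [h2]
        exact enorm_integral_le_lintegral_enorm _

/-- Sub-mean value property on polydiscs. -/
lemma ball_mean (n : ℕ) (g : (Fin n → ℂ) → ℂ) (z : Fin n → ℂ) (r : ℝ)
    (h : DifferentiableOn ℂ g (Metric.ball z r)) :
    volume (Metric.ball (0 : Fin n → ℂ) r) * ‖g z‖ₑ ^ 2 ≤
      ∫⁻ w in Metric.ball z r, ‖g w‖ₑ ^ 2 := by
  set B := Metric.ball (0 : Fin n → ℂ) r with hB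
  set H : (Fin n → ℂ) → ENNReal := B.indicator (fun w => ‖g (z + w)‖ₑ ^ 2) with hH
  have hmaps : Set.MapsTo (fun w => z + w) B (Metric.ball z r) := by
    intro w hw
    simpa [hB, dist_eq_norm] using hw
  have hBm : MeasurableSet B := Metric.isOpen_ball.measurableSet
  have hHm : Measurable H := by
    have hc : ContinuousOn (fun w => ‖g (z + w)‖ₑ ^ 2) B := by
      have : ContinuousOn (fun w => g (z + w)) B :=
        h.continuousOn.comp (by fun_prop) hmaps
      exact (ENNReal.continuous_pow 2).comp_continuousOn this.enorm
    classical
    have := hc.measurable_piecewise (continuousOn_const (c := (0 : ENNReal))) hBm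
    rw [hH, ← Set.piecewise_eq_indicator]
    exact this
  have hright : ∫⁻ w in Metric.ball z r, ‖g w‖ₑ ^ 2 = ∫⁻ w, H w := by
    rw [hH, lintegral_indicator hBm, ← lintegral_indicator hBm,
      ← lintegral_indicator Metric.isOpen_ball.measurableSet,
      ← lintegral_add_left_eq_self _ z]
    congr 1
    ext w
    by_cases hw : w ∈ B
    · rw [Set.indicator_of_mem hw, Set.indicator_of_mem (hmaps hw)]
    · rw [Set.indicator_of_notMem hw, Set.indicator_of_notMem]
      simpa [hB, dist_eq_norm] using hw
  rw [hright]
  have hrot : ∀ θ : ℝ, ∫⁻ w, H (circleMap 0 1 θ • w) = ∫⁻ w, H w := by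
    intro θ
    have := (rot_measurePreserving n (Circle.exp θ)).lintegral_comp hHm
    simpa [circleMap] using this
  have hpt : ∀ w, B.indicator (fun _ => ENNReal.ofReal (2 * Real.pi) * ‖g z‖ₑ ^ 2) w ≤
      ∫⁻ θ in Set.Ioc 0 (2 * Real.pi), H (circleMap 0 1 θ • w) := by
    intro w
    by_cases hw : w ∈ B
    · rw [Set.indicator_of_mem hw]
      have hm : ∀ ζ ∈ Metric.closedBall (0 : ℂ) 1, ζ • w ∈ B := by
        intro ζ hζ
        simp only [hB, mem_ball_zero_iff, norm_smul, mem_closedBall_zero_iff] at *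
        nlinarith [norm_nonneg w]
      have := circle_mean (fun ζ => g (z + ζ • w) ^ 2) (by
        refine DifferentiableOn.pow ?_ 2
        exact h.comp (by fun_prop) (fun ζ hζ => hmaps (hm ζ hζ)))
      simp only [zero_smul, add_zero, enorm_pow] at this
      refine this.trans (le_of_eq ?_)
      refine lintegral_congr fun θ => ?_
      rw [hH, Set.indicator_of_mem]
      exact hm _ (by simp [circleMap])
    · rw [Set.indicator_of_notMem hw]; exact zero_le
  have hint := lintegral_mono (μ := volume) hpt
  rw [lintegral_indicator hBm, setLIntegral_const, lintegral_lintegral_swap] at hint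
  · simp only [hrot, setLIntegral_const, Real.volume_Ioc, sub_zero] at hint
    have hp0 : ENNReal.ofReal (2 * Real.pi) ≠ 0 := by
      simp [Real.pi_pos]
    rw [mul_comm (∫⁻ w, H w), mul_assoc] at hint
    rw [mul_comm]
    exact (ENNReal.mul_le_mul_iff_right hp0 ENNReal.ofReal_ne_top).1 hint
  · apply Measurable.aemeasurable
    apply hHm.comp
    have : Continuous (fun p : (Fin n → ℂ) × ℝ => circleMap 0 1 p.2 • p.1) := by
      have := continuous_circleMap 0 1
      fun_prop
    exact this.measurable

/-- Cauchy estimate for the Fréchet derivative. -/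
lemma fderiv_bound (n : ℕ) (g : (Fin n → ℂ) → ℂ) (z : Fin n → ℂ) (r M : ℝ) (hr : 0 < r)
    (hM : 0 ≤ M)
    (h : DifferentiableOn ℂ g (Metric.ball z (2 * r)))
    (hb : ∀ w ∈ Metric.ball z (2 * r), ‖g w‖ ≤ M) :
    ‖fderiv ℂ g z‖ ≤ M / r := by
  apply ContinuousLinearMap.opNorm_le_of_unit_norm (by positivity)
  intro v hv
  have hm : ∀ ζ ∈ Metric.closedBall (0 : ℂ) r, z + ζ • v ∈ Metric.ball z (2 * r) := by
    intro ζ hζ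
    simp only [mem_closedBall_zero_iff, Metric.mem_ball, dist_eq_norm, add_sub_cancel_left,
      norm_smul, hv, mul_one] at *
    linarith
  have hz : DifferentiableAt ℂ g z :=
    (h z (Metric.mem_ball_self (by positivity))).differentiableAt
      (Metric.ball_mem_nhds _ (by positivity))
  have hd : deriv (fun ζ : ℂ => g (z + ζ • v)) 0 = fderiv ℂ g z v := by
    have h1 : HasDerivAt (fun ζ : ℂ => z + ζ • v) v 0 := by
      simpa using ((hasDerivAt_id (0 : ℂ)).smul_const v).const_add z
    have h2 : HasFDerivAt g (fderiv ℂ g z) (z + (0 : ℂ) • v) := by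
      simpa using hz.hasFDerivAt
    exact (h2.comp_hasDerivAt 0 h1).deriv
  rw [← hd]
  apply Complex.norm_deriv_le_of_forall_mem_sphere_norm_le hr
  · apply DifferentiableOn.diffContOnCl
    rw [closure_ball _ hr.ne']
    exact h.comp (by fun_prop) hm
  · intro ζ hζ
    exact hb _ (hm ζ (Metric.sphere_subset_closedBall hζ))

/-- Weierstrass theorem in several variables, on a ball. -/
lemma limit_differentiableAt (n : ℕ) (g : ℕ → (Fin n → ℂ) → ℂ) (G : (Fin n → ℂ) → ℂ)
    (z : Fin n → ℂ) (r : ℝ) (hr : 0 < r)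
    (h : ∀ k, DifferentiableOn ℂ (g k) (Metric.ball z r))
    (hc : UniformCauchySeqOn g Filter.atTop (Metric.ball z r))
    (hG : ∀ w ∈ Metric.ball z r, Filter.Tendsto (fun k => g k w) Filter.atTop (nhds (G w))) :
    DifferentiableAt ℂ G z := by
  have hsub : ∀ w ∈ Metric.ball z (r / 2), Metric.ball w (2 * (r / 4)) ⊆ Metric.ball z r := by
    intro w hw
    apply Metric.ball_subset_ball'
    have := Metric.mem_ball.1 hw
    linarith
  have hat : ∀ k, ∀ w ∈ Metric.ball z r, DifferentiableAt ℂ (g k) w := fun k w hw =>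
    (h k w hw).differentiableAt (Metric.isOpen_ball.mem_nhds hw)
  have hhalf : Metric.ball z (r / 2) ⊆ Metric.ball z r :=
    Metric.ball_subset_ball (by linarith)
  have hc' : UniformCauchySeqOn (fun k => fderiv ℂ (g k)) Filter.atTop
      (Metric.ball z (r / 2)) := by
    rw [Metric.uniformCauchySeqOn_iff] at hc ⊢
    intro ε hε
    obtain ⟨N, hN⟩ := hc (ε * (r / 8)) (by positivity)
    refine ⟨N, fun m hm k hk w hw => ?_⟩
    have := fderiv_bound n (g m - g k) w (r / 4) (ε * (r / 8)) (by positivity) (by positivity)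
      (((h m).sub (h k)).mono (hsub w hw)) (fun y hy => by
        have := hN m hm k hk y (hsub w hw hy)
        rw [dist_eq_norm] at this
        exact this.le)
    rw [fderiv_sub (hat m w (hhalf hw)) (hat k w (hhalf hw))] at this
    rw [dist_eq_norm]
    refine this.trans_lt ?_
    rw [div_lt_iff₀ (by positivity)]
    nlinarith
  have hex : ∀ w, ∃ L, w ∈ Metric.ball z (r / 2) →
      Filter.Tendsto (fun k => fderiv ℂ (g k) w) Filter.atTop (nhds L) := by
    intro w
    by_cases hw : w ∈ Metric.ball z (r / 2)
    · obtain ⟨L, hL⟩ := cauchySeq_tendsto_of_complete (hc'.cauchySeq hw)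
      exact ⟨L, fun _ => hL⟩
    · exact ⟨0, fun h => absurd h hw⟩
  choose G' hG' using hex
  have hu := hc'.tendstoUniformlyOn_of_tendsto hG'
  exact (hasFDerivAt_of_tendstoUniformlyOn Metric.isOpen_ball hu
    (fun k w hw => (hat k w (hhalf hw)).hasFDerivAt)
    (fun w hw => hG w (hhalf hw)) (Metric.mem_ball_self (by positivity))).differentiableAt

/-- Local uniform estimate by the `L²(μ)` distance. -/
lemma local_bound (n : ℕ) (Ω : Set (Fin n → ℂ)) (hΩ : IsOpen Ω)
    (ν : (Fin n → ℂ) → ℝ)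
    (hν_below : ∀ K : Set (Fin n → ℂ), IsCompact K → K ⊆ Ω →
      ∃ c : ℝ, 0 < c ∧ ∀ᵐ z ∂(volume.restrict K), c ≤ ν z)
    (μ : Measure (Fin n → ℂ))
    (hμ : μ = (volume.restrict Ω).withDensity fun z => ENNReal.ofReal (ν z))
    (z₀ : Fin n → ℂ) (hz₀ : z₀ ∈ Ω) :
    ∃ C r : ℝ, 0 < C ∧ 0 < r ∧ Metric.ball z₀ r ⊆ Ω ∧
      ∀ (a b : Lp ℂ 2 μ) (ga gb : (Fin n → ℂ) → ℂ), DifferentiableOn ℂ ga Ω →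
        DifferentiableOn ℂ gb Ω → (∀ᵐ z ∂μ, a z = ga z) → (∀ᵐ z ∂μ, b z = gb z) →
        ∀ z ∈ Metric.ball z₀ r, ‖ga z - gb z‖ ≤ C * dist a b := by
  obtain ⟨R, hR, hRΩ⟩ := Metric.nhds_basis_closedBall.mem_iff.1 (hΩ.mem_nhds hz₀)
  set K := Metric.closedBall z₀ R with hK
  obtain ⟨c, hc, hcν⟩ := hν_below K (isCompact_closedBall _ _) hRΩ
  have hle : ENNReal.ofReal c • volume.restrict K ≤ μ := by
    rw [Measure.le_iff]
    intro s hs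
    rw [hμ, withDensity_apply _ hs, Measure.smul_apply, smul_eq_mul, ← setLIntegral_const]
    calc ∫⁻ _ in s, ENNReal.ofReal c ∂(volume.restrict K)
        ≤ ∫⁻ z in s, ENNReal.ofReal (ν z) ∂(volume.restrict K) := by
          apply lintegral_mono_ae
          filter_upwards [ae_restrict_of_ae hcν] with z hz
          exact ENNReal.ofReal_le_ofReal hz
      _ ≤ _ := lintegral_mono' (Measure.restrict_mono le_rfl
          (Measure.restrict_mono hRΩ le_rfl)) le_rfl
  have hsub : ∀ z ∈ Metric.ball z₀ (R / 2), Metric.ball z (R / 2) ⊆ K := by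
    intro z hz
    refine (Metric.ball_subset_ball' ?_).trans Metric.ball_subset_closedBall
    have := Metric.mem_ball.1 hz
    linarith
  set V := volume (Metric.ball (0 : Fin n → ℂ) (R / 2)) with hV
  have hV0 : V ≠ 0 := (Metric.measure_ball_pos _ _ (by positivity)).ne'
  have hVt : V ≠ ⊤ := measure_ball_lt_top.ne
  set A := c * V.toReal with hA
  have hA0 : 0 < A := mul_pos hc (ENNReal.toReal_pos hV0 hVt)
  refine ⟨(Real.sqrt A)⁻¹, R / 2, by positivity, by positivity,
    (Metric.ball_subset_ball (by linarith)).trans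
      (Metric.ball_subset_closedBall.trans hRΩ), ?_⟩
  intro a b ga gb hga hgb ha hb z hz
  have h1 := ball_mean n (ga - gb) z (R / 2) ((hga.sub hgb).mono ((hsub z hz).trans hRΩ))
  have h2 : ENNReal.ofReal c * (V * ‖(ga - gb) z‖ₑ ^ 2) ≤ edist a b ^ 2 := by
    calc ENNReal.ofReal c * (V * ‖(ga - gb) z‖ₑ ^ 2)
        ≤ ENNReal.ofReal c * ∫⁻ w in K, ‖(ga - gb) w‖ₑ ^ 2 := by
          gcongr
          exact h1.trans (lintegral_mono_set (hsub z hz))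
      _ = ∫⁻ w, ‖(ga - gb) w‖ₑ ^ 2 ∂(ENNReal.ofReal c • volume.restrict K) := by
          rw [lintegral_smul_measure, smul_eq_mul]
      _ ≤ ∫⁻ w, ‖(ga - gb) w‖ₑ ^ 2 ∂μ := lintegral_mono' hle le_rfl
      _ = ∫⁻ w, ‖(a - b : (Fin n → ℂ) → ℂ) w‖ₑ ^ 2 ∂μ := by
          apply lintegral_congr_ae
          filter_upwards [ha, hb] with w h1 h2
          simp [h1, h2]
      _ = edist a b ^ 2 := by
          rw [Lp.edist_def]
          have := eLpNorm_nnreal_pow_eq_lintegral (μ := μ) (p := 2)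
            (f := (a - b : (Fin n → ℂ) → ℂ)) (by norm_num)
          simp at this
          simpa using this.symm
  have h3 : A * ‖ga z - gb z‖ ^ 2 ≤ dist a b ^ 2 := by
    have := ENNReal.toReal_mono (by finiteness) h2
    simpa [ENNReal.toReal_mul, ENNReal.toReal_ofReal hc.le, edist_dist, hA, mul_assoc]
      using this
  have h4 : Real.sqrt A * ‖ga z - gb z‖ ≤ dist a b := by
    apply (sq_le_sq₀ (by positivity) dist_nonneg).1
    rw [mul_pow, Real.sq_sqrt hA0.le]
    exact h3
  rw [inv_mul_eq_div, le_div_iff₀ (by positivity), mul_comm]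
  exact h4

/-- If the weight `ν` is locally essentially bounded below by positive constants on the open
set `Ω ⊆ ℂⁿ`, then the subset of `L²(Ω, ν·λ)` consisting of classes possessing a holomorphic
representative is a closed linear subspace (i.e. `ν` is an admissible weight). -/
theorem stmt_10 (n : ℕ) (Ω : Set (Fin n → ℂ)) (hΩ : IsOpen Ω)
    (ν : (Fin n → ℂ) → ℝ) (hν_meas : Measurable ν) (hν_nonneg : ∀ z, 0 ≤ ν z)
    (hν_below : ∀ K : Set (Fin n → ℂ), IsCompact K → K ⊆ Ω →
      ∃ c : ℝ, 0 < c ∧ ∀ᵐ z ∂(volume.restrict K), c ≤ ν z)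
    (μ : Measure (Fin n → ℂ))
    (hμ : μ = (volume.restrict Ω).withDensity fun z => ENNReal.ofReal (ν z)) :
    ∃ S : Submodule ℂ (Lp ℂ 2 μ),
      (S : Set (Lp ℂ 2 μ)) =
        {f | ∃ g : (Fin n → ℂ) → ℂ, DifferentiableOn ℂ g Ω ∧ ∀ᵐ z ∂μ, f z = g z} ∧
      IsClosed (S : Set (Lp ℂ 2 μ)) := by
  have hμΩ : ∀ᵐ z ∂μ, z ∈ Ω := by
    rw [hμ]
    exact (withDensity_absolutelyContinuous _ _).ae_le (ae_restrict_mem hΩ.measurableSet)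
  let S : Submodule ℂ (Lp ℂ 2 μ) :=
    { carrier := {f | ∃ g : (Fin n → ℂ) → ℂ, DifferentiableOn ℂ g Ω ∧ ∀ᵐ z ∂μ, f z = g z}
      zero_mem' := ⟨fun _ => 0, differentiableOn_const _, by
        filter_upwards [Lp.coeFn_zero ℂ 2 μ] with z hz
        simpa using hz⟩
      add_mem' := by
        rintro a b ⟨ga, hga, ha⟩ ⟨gb, hgb, hb⟩
        refine ⟨ga + gb, hga.add hgb, ?_⟩
        filter_upwards [ha, hb, Lp.coeFn_add a b] with z h1 h2 h3
        rw [h3, Pi.add_apply, Pi.add_apply, h1, h2]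
      smul_mem' := by
        rintro c a ⟨ga, hga, ha⟩
        refine ⟨c • ga, hga.const_smul c, ?_⟩
        filter_upwards [ha, Lp.coeFn_smul c a] with z h1 h3
        rw [h3, Pi.smul_apply, Pi.smul_apply, h1] }
  refine ⟨S, rfl, ?_⟩
  apply IsSeqClosed.isClosed
  intro F f hF hFf
  choose g hg hgF using hF
  have hloc : ∀ z ∈ Ω, ∃ r : ℝ, 0 < r ∧ Metric.ball z r ⊆ Ω ∧
      UniformCauchySeqOn g Filter.atTop (Metric.ball z r) := by
    intro z hz
    obtain ⟨C, r, hC, hr, hsub, hbd⟩ := local_bound n Ω hΩ ν hν_below μ hμ z hz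
    refine ⟨r, hr, hsub, ?_⟩
    rw [Metric.uniformCauchySeqOn_iff]
    intro ε hε
    obtain ⟨N, hN⟩ := Metric.cauchySeq_iff.1 hFf.cauchySeq (ε / C) (by positivity)
    refine ⟨N, fun m hm k hk w hw => ?_⟩
    rw [dist_eq_norm]
    refine (hbd (F m) (F k) (g m) (g k) (hg m) (hg k) (hgF m) (hgF k) w hw).trans_lt ?_
    have := hN m hm k hk
    rwa [lt_div_iff₀ hC, mul_comm] at this
  have hex : ∀ w, ∃ L, w ∈ Ω →
      Filter.Tendsto (fun k => g k w) Filter.atTop (nhds L) := by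
    intro w
    by_cases hw : w ∈ Ω
    · obtain ⟨r, hr, -, hu⟩ := hloc w hw
      obtain ⟨L, hL⟩ := cauchySeq_tendsto_of_complete (hu.cauchySeq (Metric.mem_ball_self hr))
      exact ⟨L, fun _ => hL⟩
    · exact ⟨0, fun h => absurd h hw⟩
  choose G hG using hex
  refine ⟨G, ?_, ?_⟩
  · intro z hz
    obtain ⟨r, hr, hsub, hu⟩ := hloc z hz
    exact (limit_differentiableAt n g G z r hr (fun k => (hg k).mono hsub) hu
      (fun w hw => hG w (hsub hw))).differentiableWithinAt
  · obtain ⟨φ, hφ, hlim⟩ := (tendstoInMeasure_of_tendsto_Lp hFf).exists_seq_tendsto_ae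
    filter_upwards [hμΩ, hlim, ae_all_iff.2 hgF] with z hz h1 h2
    refine tendsto_nhds_unique h1 ?_
    simp only [h2]
    exact (hG z hz).comp hφ.tendsto_atTop
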